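/- The rotating Kepler problem has infinitely many consecutive collision orbits of every order, all of minimal order 1: for every integer k ≥ 1 and every x ∈ C, the iterate f^k(x) again lies in C (so every point of C is a chord of order k of the collision Lagrangian C, and in particular of minimal order 1), and the set C is infinite. -/

import Mathlib

noncomputable section

/-- Phase-space points: pairs `(ξ, η) ∈ ℝ⁴ × ℝ⁴`. -/
abbrev Pt := (Fin 4 → ℝ) × (Fin 4 → ℝ)

/-- Euclidean norm on `ℝ⁴` (written componentwise). -/
def nrm4 (v : Fin 4 → ℝ) : ℝ := Real.sqrt (v 0 ^ 2 + v 1 ^ 2 + v 2 ^ 2 + v 3 ^ 2)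

/-- Euclidean inner product on `ℝ⁴`. -/
def inner4 (v w : Fin 4 → ℝ) : ℝ := v 0 * w 0 + v 1 * w 1 + v 2 * w 2 + v 3 * w 3

/-- The angular momentum `L(ξ,η) = ξ₂η₁ − ξ₁η₂`. -/
def angL (x : Pt) : ℝ := x.1 2 * x.2 1 - x.1 1 * x.2 2

/-- `f̂(ξ,η) = 1 + (1 − ξ₀)(−c − ½ + L(ξ,η))`. -/
def fhat (c : ℝ) (x : Pt) : ℝ := 1 + (1 - x.1 0) * (-c - 1 / 2 + angL x)

/-- The Moser-regularized rotating Kepler Hamiltonian `Q(ξ,η) = ½ f̂(ξ,η)² ‖η‖²`. -/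
def Qham (c : ℝ) (x : Pt) : ℝ := (1 / 2) * (fhat c x) ^ 2 * (nrm4 x.2) ^ 2

/-- The period `T(K) = π/(2(−K)^{3/2})` of a Kepler ellipse of energy `K < 0`,
extended by `0` for `K ≥ 0`. -/
def period (K : ℝ) : ℝ :=
  if K < 0 then Real.pi / (2 * (-K) ^ ((3 : ℝ) / 2)) else 0

/-- Rotation of `ℝ²` by angle `φ`. -/
def Rot (φ : ℝ) (a b : ℝ) : ℝ × ℝ :=
  (Real.cos φ * a - Real.sin φ * b, Real.sin φ * a + Real.cos φ * b)

/-- Membership in the page `P = {(ξ,η) ∈ T*S³ : Q = ½, ξ₃ = 0, η₃ ≥ 0}`, where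
`T*S³ = {(ξ,η) : ⟨ξ,η⟩ = 0, ‖ξ‖ = 1}`. -/
def memP (c : ℝ) (x : Pt) : Prop :=
  inner4 x.1 x.2 = 0 ∧ nrm4 x.1 = 1 ∧ Qham c x = 1 / 2 ∧ x.1 3 = 0 ∧ 0 ≤ x.2 3

/-- Membership in the collision locus `C = {(ξ,η) ∈ P : ξ₀ = 1}`. -/
def memC (c : ℝ) (x : Pt) : Prop := memP c x ∧ x.1 0 = 1

/-- The Poincaré return map
`f(ξ₀,ξ₁,ξ₂,0; η₀,η₁,η₂,η₃) = (ξ₀, R_{T(c−L)}(ξ₁,ξ₂), 0; η₀, R_{T(c−L)}(η₁,η₂), η₃)`. -/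
def ret (c : ℝ) (x : Pt) : Pt :=
  (![x.1 0, (Rot (period (c - angL x)) (x.1 1) (x.1 2)).1,
      (Rot (period (c - angL x)) (x.1 1) (x.1 2)).2, 0],
   ![x.2 0, (Rot (period (c - angL x)) (x.2 1) (x.2 2)).1,
      (Rot (period (c - angL x)) (x.2 1) (x.2 2)).2, x.2 3])

/-! The return map rotates `ξ` and `η` simultaneously in the `(1, 2)`-plane. Such a rotation
preserves the inner product, the norms and the angular momentum, hence `f̂` and `Q`, and it does not
move the coordinates `0` and `3`; so it preserves the page and the condition `ξ₀ = 1`, whatever its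
angle. Over `ξ = (1, 0, 0, 0)` one has `f̂ = 1`, so the collision locus contains a unit hemisphere
of covectors. -/

theorem nrm4_nonneg (v : Fin 4 → ℝ) : 0 ≤ nrm4 v := Real.sqrt_nonneg _

theorem nrm4_eq_sqrt_inner4 (v : Fin 4 → ℝ) : nrm4 v = Real.sqrt (inner4 v v) := by
  simp only [nrm4, inner4, sq]

/-- The rotation of `ℝ⁴` by the angle `φ` in the plane of the coordinates `1` and `2`; the return
map applies it to both `ξ` and `η`. -/
def planeRot (φ : ℝ) (v : Fin 4 → ℝ) : Fin 4 → ℝ :=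
  ![v 0, (Rot φ (v 1) (v 2)).1, (Rot φ (v 1) (v 2)).2, v 3]

/-- The diagonal action of `planeRot φ` on phase space, the one induced on `T*S³` by an isometry of
`S³`. -/
def phaseRot (φ : ℝ) : Pt → Pt := Prod.map (planeRot φ) (planeRot φ)

section Rotation

variable (φ : ℝ)

theorem inner4_planeRot (v w : Fin 4 → ℝ) :
    inner4 (planeRot φ v) (planeRot φ w) = inner4 v w := by
  simp only [inner4, planeRot, Rot, Matrix.cons_val]
  linear_combination (v 1 * w 1 + v 2 * w 2) * Real.sin_sq_add_cos_sq φ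

theorem nrm4_planeRot (v : Fin 4 → ℝ) : nrm4 (planeRot φ v) = nrm4 v := by
  rw [nrm4_eq_sqrt_inner4, inner4_planeRot, ← nrm4_eq_sqrt_inner4]

theorem angL_phaseRot (x : Pt) : angL (phaseRot φ x) = angL x := by
  simp only [angL, phaseRot, planeRot, Rot, Prod.map, Matrix.cons_val]
  linear_combination (x.1 2 * x.2 1 - x.1 1 * x.2 2) * Real.sin_sq_add_cos_sq φ

theorem fhat_phaseRot (c : ℝ) (x : Pt) : fhat c (phaseRot φ x) = fhat c x := by
  have h_zero : (phaseRot φ x).1 0 = x.1 0 := rfl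
  rw [fhat, fhat, h_zero, angL_phaseRot]

theorem Qham_phaseRot (c : ℝ) (x : Pt) : Qham c (phaseRot φ x) = Qham c x := by
  have h_covector : (phaseRot φ x).2 = planeRot φ x.2 := rfl
  rw [Qham, Qham, fhat_phaseRot, h_covector, nrm4_planeRot]

theorem memP.phaseRot {c : ℝ} {x : Pt} (hx : memP c x) : memP c (phaseRot φ x) := by
  obtain ⟨h_inner, h_norm, h_energy, h_three, h_nonneg⟩ := hx
  exact ⟨(inner4_planeRot φ x.1 x.2).trans h_inner, (nrm4_planeRot φ x.1).trans h_norm,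
    (Qham_phaseRot φ c x).trans h_energy, h_three, h_nonneg⟩

theorem memC.phaseRot {c : ℝ} {x : Pt} (hx : memC c x) : memC c (phaseRot φ x) :=
  ⟨hx.1.phaseRot φ, hx.2⟩

end Rotation

theorem ret_eq_phaseRot {c : ℝ} {x : Pt} (h_three : x.1 3 = 0) :
    ret c x = phaseRot (period (c - angL x)) x := by
  simp only [ret, phaseRot, planeRot, Prod.map, h_three]

theorem mapsTo_ret_memC (c : ℝ) : Set.MapsTo (ret c) {x | memC c x} {x | memC c x} := by
  intro x (hx : memC c x)
  have h_three : x.1 3 = 0 := hx.1.2.2.2.1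
  rw [ret_eq_phaseRot h_three]
  exact hx.phaseRot _

theorem Qham_eq_half_iff_of_collision {c : ℝ} {x : Pt} (h_zero : x.1 0 = 1) :
    Qham c x = 1 / 2 ↔ nrm4 x.2 = 1 := by
  have h_fhat : fhat c x = 1 := by rw [fhat, h_zero, sub_self, zero_mul, add_zero]
  rw [Qham, h_fhat, one_pow, mul_one, mul_eq_left₀ one_half_pos.ne',
    pow_eq_one_iff_of_nonneg (nrm4_nonneg _) two_ne_zero]

theorem memC_north_pole_iff {c : ℝ} {η : Fin 4 → ℝ} :
    memC c (![1, 0, 0, 0], η) ↔ η 0 = 0 ∧ nrm4 η = 1 ∧ 0 ≤ η 3 := by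
  have h_inner : inner4 ![1, 0, 0, 0] η = η 0 := by simp [inner4]
  have h_norm : nrm4 ![1, 0, 0, 0] = 1 := by simp [nrm4]
  have h_energy : Qham c (![1, 0, 0, 0], η) = 1 / 2 ↔ nrm4 η = 1 :=
    Qham_eq_half_iff_of_collision rfl
  simp [memC, memP, h_inner, h_norm, h_energy, -one_div]

theorem infinite_setOf_memC (c : ℝ) : {x : Pt | memC c x}.Infinite := by
  let quarterCircle : ℝ → Pt := fun t ↦ (![1, 0, 0, 0], ![0, 0, Real.sqrt (1 - t ^ 2), t])
  have h_inj : Function.Injective quarterCircle := fun s t hst ↦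
    congrFun (congrArg Prod.snd hst) 3
  have h_maps : Set.MapsTo quarterCircle (Set.Icc 0 1) {x | memC c x} := by
    rintro t ⟨ht_nonneg, ht_le_one⟩
    have h_radicand : 0 ≤ 1 - t ^ 2 := sub_nonneg.2 (pow_le_one₀ ht_nonneg ht_le_one)
    have h_norm : nrm4 ![0, 0, Real.sqrt (1 - t ^ 2), t] = 1 := by
      simp [nrm4, Real.sq_sqrt h_radicand]
    exact memC_north_pole_iff.2 ⟨rfl, h_norm, ht_nonneg⟩
  exact Set.infinite_of_injOn_mapsTo h_inj.injOn h_maps (Set.Icc_infinite zero_lt_one)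

theorem infinitely_many_collision_chords_of_every_order_general (c : ℝ) :
    (∀ k : ℕ, ∀ x : Pt, memC c x → memC c ((ret c)^[k] x)) ∧ {x : Pt | memC c x}.Infinite :=
  ⟨fun k _ hx ↦ (mapsTo_ret_memC c).iterate k hx, infinite_setOf_memC c⟩

/-- for every `k ≥ 1`, every point of the collision locus `C` is a
chord of order `k` (so in particular of minimal order `1`): `f^[k]` maps `C`
into `C`; moreover `C` is infinite, so there are infinitely many consecutive
collision orbits of every order. -/
theorem infinitely_many_collision_chords_of_every_order
    (c : ℝ) (hc : c < -(3 / 2)) :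
    (∀ k : ℕ, 1 ≤ k → ∀ x : Pt, memC c x → memC c ((ret c)^[k] x)) ∧
    {x : Pt | memC c x}.Infinite := by
  obtain ⟨h_chord, h_infinite⟩ := infinitely_many_collision_chords_of_every_order_general c
  exact ⟨fun k _ ↦ h_chord k, h_infinite⟩

end
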